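/- (Lower bound of mixing time of LMC, Theorem 5) Let f(x) = (m/2)·Σ_{i=1}^d x_i² + (L/2)·Σ_{i=d+1}^{2d} x_i² on ℝ^{2d} with m = 1 and L ≥ 4, and let μ be the probability measure on ℝ^{2d} with density proportional to exp(−f). Run LMC from x₀ = (1,1,…,1) ∈ ℝ^{2d} with any step size h satisfying 0 < h < 2/L. Then for every ε > 0, every k with k < (√d/(8ε))·log(√d/ε) satisfies W₂(Law(x̄_k), μ) > ε; i.e., the ε-mixing time of LMC in W₂ is at least (√d/(8ε))·log(√d/ε). -/

import Mathlib

open MeasureTheory ProbabilityTheory Real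
open scoped ENNReal NNReal

noncomputable section

/-- `ℝ^d` with the Euclidean structure. -/
abbrev Euc (d : ℕ) := EuclideanSpace ℝ (Fin d)

/-- The standard Gaussian measure `N(0, I_d)` on `ℝ^d`. -/
noncomputable def stdGaussian (d : ℕ) : Measure (Euc d) :=
  (Measure.pi fun _ : Fin d => gaussianReal 0 1).map (EuclideanSpace.equiv (Fin d) ℝ).symm

/-- The centered Gaussian measure on `ℝ^d` with covariance `σ2 • I_d`. -/
noncomputable def isoGaussian (d : ℕ) (σ2 : ℝ) : Measure (Euc d) :=
  (stdGaussian d).map fun x => Real.sqrt σ2 • x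

/-- `B` is a standard `d`-dimensional Brownian motion with respect to the filtration `ℱ`
under the probability measure `P`. -/
structure IsStdBrownian {d : ℕ} {Ω : Type*} {mΩ : MeasurableSpace Ω} (P : Measure Ω)
    (ℱ : Filtration ℝ mΩ) (B : ℝ → Ω → Euc d) : Prop where
  init : ∀ ω, B 0 ω = 0
  cont : ∀ ω, Continuous fun t => B t ω
  adapted : StronglyAdapted ℱ B
  incr_law : ∀ s t : ℝ, 0 ≤ s → s ≤ t →
    P.map (fun ω => B t ω - B s ω) = isoGaussian d (t - s)
  incr_indep : ∀ s t : ℝ, 0 ≤ s → s ≤ t →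
    Indep (MeasurableSpace.comap (fun ω => B t ω - B s ω) inferInstance) (ℱ s) P

/-- `X` is a (pathwise) solution of the overdamped Langevin dynamics
`dX_t = -∇f(X_t) dt + √2 dB_t`: a continuous adapted process satisfying the integral
equation `X_t = X_0 - ∫₀ᵗ ∇f(X_s) ds + √2 B_t` for all `t ≥ 0`. -/
structure IsLangevinSolution {d : ℕ} {Ω : Type*} {mΩ : MeasurableSpace Ω}
    (ℱ : Filtration ℝ mΩ) (f : Euc d → ℝ) (B : ℝ → Ω → Euc d) (X : ℝ → Ω → Euc d) : Prop where
  cont : ∀ ω, Continuous fun t => X t ω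
  adapted : StronglyAdapted ℱ X
  eqn : ∀ ω, ∀ t : ℝ, 0 ≤ t →
    X t ω = X 0 ω - (∫ s in (0:ℝ)..t, gradient f (X s ω)) + Real.sqrt 2 • B t ω

/-- The Hessian bounds `m • I ≼ ∇²f(x) ≼ L • I` for all `x`, expressed through the second
iterated Fréchet derivative: `m ‖v‖² ≤ ⟨v, ∇²f(x) v⟩ ≤ L ‖v‖²`. -/
def HessianBounds {d : ℕ} (m L : ℝ) (f : Euc d → ℝ) : Prop :=
  ∀ x v : Euc d, m * ‖v‖ ^ 2 ≤ iteratedFDeriv ℝ 2 f x ![v, v] ∧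
    iteratedFDeriv ℝ 2 f x ![v, v] ≤ L * ‖v‖ ^ 2


/-- The 2-Wasserstein distance:
`W₂(μ, ν) = inf over couplings γ of (∫ ‖x - y‖² dγ)^{1/2}`, where a coupling of `μ` and `ν`
is a probability measure on the product space whose marginals are `μ` and `ν`. -/
noncomputable def W2 {α : Type*} [MeasurableSpace α] [NormedAddCommGroup α]
    (μ ν : Measure α) : ℝ :=
  Real.sqrt (ENNReal.toReal
    (⨅ γ ∈ {γ : Measure (α × α) |
        IsProbabilityMeasure γ ∧ γ.map Prod.fst = μ ∧ γ.map Prod.snd = ν},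
      ∫⁻ p, (‖p.1 - p.2‖₊ : ℝ≥0∞) ^ 2 ∂γ))

/-- `μ` is the probability measure with density proportional to `exp (-f)` with respect to
Lebesgue measure. -/
def IsGibbs {d : ℕ} (f : Euc d → ℝ) (μ : Measure (Euc d)) : Prop :=
  IsProbabilityMeasure μ ∧ ∃ c : ℝ≥0∞, c ≠ 0 ∧ c ≠ ⊤ ∧
    μ = c • (volume : Measure (Euc d)).withDensity fun x => ENNReal.ofReal (Real.exp (-f x))


/-- The quadratic potential `f(x) = (m/2) Σ_{i<d} x_i² + (L/2) Σ_{d ≤ i < 2d} x_i²` on `ℝ^{2d}`. -/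
noncomputable def fquad (d : ℕ) (m L : ℝ) : Euc (2 * d) → ℝ :=
  fun x => ∑ i : Fin (2 * d), ((if (i : ℕ) < d then m else L) / 2) * x i ^ 2

/-!
In every coupling, a coordinate with means `m, m'` and standard deviations `σ, σ'` contributes at
least `(σ - σ')² + (m - m')²` to the transport cost. On a coordinate of unit curvature, LMC is an
autoregressive process with mean `p = (1 - h)ᵏ` and variance `v` such that
`(1 - h/2) v = 1 - p²`, whereas the target is `N(0, 1)`. Put `r = ε / √d`. If `p > r`, the means are
too far apart. If `p ≤ r` already for some `k < log (1/r) / (8r)`, the step size must exceed `4r`,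
and the discretization bias then inflates the standard deviation beyond `1 + r`. Either way each of
the `d` coordinates contributes more than `r²`.
-/

section Wasserstein

variable {Ω Ω' : Type*} [MeasurableSpace Ω] [MeasurableSpace Ω'] {P : Measure Ω}
  {Q : Measure Ω'}

lemma covariance_le_sqrt_variance_mul_variance [IsFiniteMeasure P] {U V : Ω → ℝ}
    (hU : MemLp U 2 P) (hV : MemLp V 2 P) : cov[U, V; P] ≤ √(Var[U; P] * Var[V; P]) := by
  have hvar : ∀ t : ℝ, 0 ≤ Var[U; P] * (t * t) + -2 * cov[U, V; P] * t + Var[V; P] := fun t ↦ by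
    calc 0 ≤ Var[t • U - V; P] := variance_nonneg _ _
      _ = _ := by
        rw [variance_sub (hU.const_smul t) hV, variance_smul, covariance_smul_left]
        ring
  have hdiscrim := discrim_le_zero hvar
  rw [discrim] at hdiscrim
  exact Real.le_sqrt_of_sq_le (by linarith)

lemma sq_sub_stdDev_add_sq_sub_mean_le [IsProbabilityMeasure P] {U V : Ω → ℝ}
    (hU : MemLp U 2 P) (hV : MemLp V 2 P) :
    (√Var[U; P] - √Var[V; P]) ^ 2 + (P[U] - P[V]) ^ 2 ≤ ∫ ω, (U ω - V ω) ^ 2 ∂P := by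
  have hstd : (√Var[U; P] - √Var[V; P]) ^ 2 ≤ Var[U - V; P] := by
    have hcov := covariance_le_sqrt_variance_mul_variance hU hV
    rw [Real.sqrt_mul (variance_nonneg U P)] at hcov
    rw [variance_sub hU hV, sub_sq, Real.sq_sqrt (variance_nonneg U P),
      Real.sq_sqrt (variance_nonneg V P)]
    linarith
  have hmean : P[U - V] = P[U] - P[V] :=
    integral_sub (hU.integrable one_le_two) (hV.integrable one_le_two)
  have hsecond : Var[U - V; P] = ∫ ω, (U ω - V ω) ^ 2 ∂P - (P[U] - P[V]) ^ 2 := by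
    rw [variance_eq_sub (hU.sub hV), hmean]
    rfl
  linarith

lemma lintegral_nnnorm_sq_eq_ofReal {E : Type*} [NormedAddCommGroup E] {f : Ω → E}
    (hf : MemLp f 2 P) :
    ∫⁻ ω, (‖f ω‖₊ : ℝ≥0∞) ^ 2 ∂P = ENNReal.ofReal (∫ ω, ‖f ω‖ ^ 2 ∂P) := by
  rw [ofReal_integral_eq_lintegral_ofReal (hf.integrable_norm_pow two_ne_zero)
    (.of_forall fun ω ↦ by positivity)]
  simp_rw [ENNReal.ofReal_pow (norm_nonneg _), ofReal_norm, enorm_eq_nnnorm]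

lemma le_sq_W2 {E : Type*} [NormedAddCommGroup E] [MeasurableSpace E] [BorelSpace E]
    [SecondCountableTopology E] {μ ν : Measure E} [IsProbabilityMeasure μ] [IsProbabilityMeasure ν]
    (hμ : MemLp id 2 μ) (hν : MemLp id 2 ν) {C : ℝ}
    (hC : ∀ γ : Measure (E × E), HasLaw Prod.fst μ γ → HasLaw Prod.snd ν γ →
      C ≤ ∫ p, ‖p.1 - p.2‖ ^ 2 ∂γ) :
    C ≤ W2 μ ν ^ 2 := by
  have hcost : ∀ γ : Measure (E × E), HasLaw Prod.fst μ γ → HasLaw Prod.snd ν γ →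
      ∫⁻ p, (‖p.1 - p.2‖₊ : ℝ≥0∞) ^ 2 ∂γ = ENNReal.ofReal (∫ p, ‖p.1 - p.2‖ ^ 2 ∂γ) := by
    intro γ hfst hsnd
    exact lintegral_nnnorm_sq_eq_ofReal <|
      ((HasLaw.id.identDistrib hfst).memLp_snd hμ).sub ((HasLaw.id.identDistrib hsnd).memLp_snd hν)
  have hprod : (μ.prod ν).map Prod.fst = μ ∧ (μ.prod ν).map Prod.snd = ν := by simp
  rw [W2, Real.sq_sqrt ENNReal.toReal_nonneg, ← ENNReal.ofReal_le_iff_le_toReal]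
  · refine le_iInf₂ fun γ hγ ↦ ?_
    have hfst : HasLaw Prod.fst μ γ := ⟨by fun_prop, hγ.2.1⟩
    have hsnd : HasLaw Prod.snd ν γ := ⟨by fun_prop, hγ.2.2⟩
    rw [hcost γ hfst hsnd]
    exact ENNReal.ofReal_le_ofReal (hC γ hfst hsnd)
  · refine ne_top_of_le_ne_top ?_ (iInf₂_le (μ.prod ν) ⟨inferInstance, hprod⟩)
    rw [hcost (μ.prod ν) ⟨by fun_prop, hprod.1⟩ ⟨by fun_prop, hprod.2⟩]
    exact ENNReal.ofReal_ne_top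

theorem sum_sq_sub_stdDev_add_sq_sub_mean_le_sq_W2 {ι : Type*} [Fintype ι]
    [IsProbabilityMeasure P] [IsProbabilityMeasure Q] {μ ν : Measure (EuclideanSpace ℝ ι)}
    {X : Ω → EuclideanSpace ℝ ι} {Y : Ω' → EuclideanSpace ℝ ι}
    (hX : HasLaw X μ P) (hY : HasLaw Y ν Q) (hX2 : MemLp X 2 P) (hY2 : MemLp Y 2 Q) :
    ∑ i, ((√Var[fun ω ↦ X ω i; P] - √Var[fun ω ↦ Y ω i; Q]) ^ 2 +
      (∫ ω, X ω i ∂P - ∫ ω, Y ω i ∂Q) ^ 2) ≤ W2 μ ν ^ 2 := by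
  have : IsProbabilityMeasure μ := hX.isProbabilityMeasure_iff.1 inferInstance
  have : IsProbabilityMeasure ν := hY.isProbabilityMeasure_iff.1 inferInstance
  refine le_sq_W2 ((hX.identDistrib .id).memLp_snd hX2) ((hY.identDistrib .id).memLp_snd hY2)
    fun γ hfst hsnd ↦ ?_
  have : IsProbabilityMeasure γ := hfst.isProbabilityMeasure
  have hcoord (i : ι) : Measurable fun x : EuclideanSpace ℝ ι ↦ x i := by fun_prop
  have hXi (i : ι) := (hX.identDistrib hfst).comp (hcoord i)
  have hYi (i : ι) := (hY.identDistrib hsnd).comp (hcoord i)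
  have hfst2 (i : ι) : MemLp (fun p ↦ p.1 i) 2 γ := (hXi i).memLp_snd (hX2.eval_piLp i)
  have hsnd2 (i : ι) : MemLp (fun p ↦ p.2 i) 2 γ := (hYi i).memLp_snd (hY2.eval_piLp i)
  have hdiff (i : ι) : Integrable (fun p : EuclideanSpace ℝ ι × EuclideanSpace ℝ ι ↦
      (p.1 i - p.2 i) ^ 2) γ := ((hfst2 i).sub (hsnd2 i)).integrable_sq
  simp_rw [EuclideanSpace.real_norm_sq_eq, PiLp.sub_apply]
  rw [integral_finsetSum _ fun i _ ↦ hdiff i]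
  refine Finset.sum_le_sum fun i _ ↦ ?_
  refine le_of_eq_of_le ?_ (sq_sub_stdDev_add_sq_sub_mean_le (hfst2 i) (hsnd2 i))
  exact congr_arg₂ (· + ·)
    (congr_arg₂ (fun s t ↦ (√s - √t) ^ 2) (hXi i).variance_eq (hYi i).variance_eq)
    (congr_arg₂ (fun s t ↦ (s - t) ^ 2) (hXi i).integral_eq (hYi i).integral_eq)

end Wasserstein

section Gaussian

lemma pi_withDensity_ofReal {ι : Type*} [Fintype ι] {α : ι → Type*}
    [∀ i, MeasurableSpace (α i)] {μ : ∀ i, Measure (α i)} [∀ i, SigmaFinite (μ i)]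
    {f : ∀ i, α i → ℝ} (hf : ∀ i, Integrable (f i) (μ i)) (hf0 : ∀ i x, 0 ≤ f i x) :
    Measure.pi (fun i ↦ (μ i).withDensity fun x ↦ ENNReal.ofReal (f i x)) =
      (Measure.pi μ).withDensity fun x ↦ ENNReal.ofReal (∏ i, f i (x i)) := by
  have (i : ι) : IsFiniteMeasure ((μ i).withDensity fun x ↦ ENNReal.ofReal (f i x)) :=
    isFiniteMeasure_withDensity_ofReal (hf i).2
  refine Measure.pi_eq fun s hs ↦ ?_
  rw [withDensity_apply _ (MeasurableSet.univ_pi hs), Measure.restrict_pi_pi,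
    ← ofReal_integral_eq_lintegral_ofReal (Integrable.fintype_prod_dep fun i ↦ (hf i).restrict)
      (.of_forall fun x ↦ Finset.prod_nonneg fun i _ ↦ hf0 i (x i)),
    integral_fintype_prod_eq_prod (𝕜 := ℝ),
    ENNReal.ofReal_prod_of_nonneg fun i _ ↦ integral_nonneg (hf0 i)]
  refine Finset.prod_congr rfl fun i _ ↦ ?_
  rw [withDensity_apply _ (hs i),
    ofReal_integral_eq_lintegral_ofReal (hf i).restrict (.of_forall (hf0 i))]

/-- The centered Gaussian measure on `ℝⁿ` with independent coordinates of variances `v i`. -/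
def diagGaussian {n : ℕ} (v : Fin n → ℝ≥0) : Measure (Euc n) :=
  (Measure.pi fun i ↦ gaussianReal 0 (v i)).map (WithLp.toLp 2)

instance {n : ℕ} (v : Fin n → ℝ≥0) : IsProbabilityMeasure (diagGaussian v) :=
  Measure.isProbabilityMeasure_map (by fun_prop)

lemma stdGaussian_eq_diagGaussian (n : ℕ) : stdGaussian n = diagGaussian 1 := rfl

lemma hasLaw_eval_diagGaussian {n : ℕ} (v : Fin n → ℝ≥0) (i : Fin n) :
    HasLaw (fun x : Euc n ↦ x i) (gaussianReal 0 (v i)) (diagGaussian v) where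
  map_eq := by
    rw [diagGaussian, Measure.map_map (by fun_prop) (by fun_prop)]
    exact (measurePreserving_eval (fun i ↦ gaussianReal 0 (v i)) i).map_eq

lemma memLp_two_of_hasLaw_gaussianReal {Ω : Type*} [MeasurableSpace Ω] {P : Measure Ω}
    {X : Ω → ℝ} {m : ℝ} {v : ℝ≥0} (hX : HasLaw X (gaussianReal m v) P) : MemLp X 2 P :=
  (HasLaw.id.identDistrib hX).memLp_snd (memLp_id_gaussianReal 2)

end Gaussian

section Gibbs

lemma IsGibbs.unique {n : ℕ} {f : Euc n → ℝ} {μ ν : Measure (Euc n)} (hμ : IsGibbs f μ)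
    (hν : IsGibbs f ν) : μ = ν := by
  obtain ⟨hμ1, b, -, -, rfl⟩ := hμ
  obtain ⟨hν1, c, -, -, rfl⟩ := hν
  have hb := hμ1.measure_univ
  have hc := hν1.measure_univ
  rw [Measure.smul_apply, smul_eq_mul] at hb hc
  rw [ENNReal.eq_inv_of_mul_eq_one_left hb, ENNReal.eq_inv_of_mul_eq_one_left hc]

/-- The quadratic potential `x ↦ ½ ∑ aᵢ xᵢ²`, whose Hessian is `diag a`. -/
def diagQuadratic {ι : Type*} [Fintype ι] (a : ι → ℝ) (x : EuclideanSpace ℝ ι) : ℝ :=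
  ∑ i, a i / 2 * x i ^ 2

lemma gradient_diagQuadratic {ι : Type*} [Fintype ι] (a : ι → ℝ) (x : EuclideanSpace ℝ ι) :
    gradient (diagQuadratic a) x = WithLp.toLp 2 fun i ↦ a i * x i := by
  refine HasGradientAt.gradient (hasGradientAt_iff_hasFDerivAt.2 ?_)
  have hcoord (i : ι) : HasFDerivAt (fun x : EuclideanSpace ℝ ι ↦ a i / 2 * x i ^ 2)
      ((a i / 2) • (2 * x i) • (EuclideanSpace.proj i : EuclideanSpace ℝ ι →L[ℝ] ℝ)) x := by
    simpa using ((EuclideanSpace.proj (𝕜 := ℝ) i).hasFDerivAt.pow 2).const_mul (a i / 2)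
  refine (HasFDerivAt.fun_sum fun i _ ↦ hcoord i).congr_fderiv ?_
  ext y
  simp only [sum_apply, smul_apply, PiLp.proj_apply, smul_eq_mul,
    InnerProductSpace.toDual_apply_apply, PiLp.inner_apply, RCLike.inner_apply, conj_trivial]
  exact Finset.sum_congr rfl fun i _ ↦ by ring

lemma gaussianPDFReal_inv_precision {a : ℝ} (ha : 0 < a) (x : ℝ) :
    gaussianPDFReal 0 a⁻¹.toNNReal x = √(a / (2 * π)) * Real.exp (-(a / 2 * x ^ 2)) := by
  rw [gaussianPDFReal, Real.coe_toNNReal _ (inv_nonneg.2 ha.le), ← Real.sqrt_inv]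
  congr 2 <;> field_simp
  ring

lemma diagGaussian_eq_withDensity {n : ℕ} {a : Fin n → ℝ} (ha : ∀ i, 0 < a i) :
    diagGaussian (fun i ↦ (a i)⁻¹.toNNReal) = (volume : Measure (Euc n)).withDensity fun x ↦
      ENNReal.ofReal ((∏ i, √(a i / (2 * π))) * Real.exp (-diagQuadratic a x)) := by
  have hgauss (i : Fin n) : gaussianReal 0 (a i)⁻¹.toNNReal =
      volume.withDensity fun x ↦ ENNReal.ofReal (gaussianPDFReal 0 (a i)⁻¹.toNNReal x) :=
    gaussianReal_of_var_ne_zero _ (Real.toNNReal_pos.2 (inv_pos.2 (ha i))).ne'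
  have hdensity (x : Fin n → ℝ) : ∏ i, gaussianPDFReal 0 (a i)⁻¹.toNNReal (x i) =
      (∏ i, √(a i / (2 * π))) * Real.exp (-diagQuadratic a (WithLp.toLp 2 x)) := by
    simp only [gaussianPDFReal_inv_precision (ha _), diagQuadratic, Finset.prod_mul_distrib,
      ← Finset.sum_neg_distrib, Real.exp_sum]
  simp_rw [diagGaussian, hgauss]
  rw [pi_withDensity_ofReal (fun i ↦ integrable_gaussianPDFReal _ _)
    fun i ↦ gaussianPDFReal_nonneg _ _]
  simp_rw [hdensity]
  have hmeas : Measurable (diagQuadratic a) := by unfold diagQuadratic; fun_prop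
  ext s hs
  rw [Measure.map_apply (by fun_prop) hs, withDensity_apply _ hs,
    withDensity_apply _ (hs.preimage (by fun_prop)),
    ← (PiLp.volume_preserving_toLp (Fin n)).map_eq,
    setLIntegral_map hs (by fun_prop) (by fun_prop), volume_pi]

lemma isGibbs_diagQuadratic {n : ℕ} {a : Fin n → ℝ} (ha : ∀ i, 0 < a i) :
    IsGibbs (diagQuadratic a) (diagGaussian fun i ↦ (a i)⁻¹.toNNReal) := by
  have hZ : 0 < ∏ i, √(a i / (2 * π)) :=
    Finset.prod_pos fun i _ ↦ Real.sqrt_pos.2 (div_pos (ha i) two_pi_pos)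
  refine ⟨inferInstance, ENNReal.ofReal (∏ i, √(a i / (2 * π))), (ENNReal.ofReal_pos.2 hZ).ne',
    ENNReal.ofReal_ne_top, ?_⟩
  rw [diagGaussian_eq_withDensity ha, ← withDensity_smul']
  · simp_rw [ENNReal.ofReal_mul hZ.le]
    rfl
  · exact ENNReal.ofReal_ne_top

lemma hasLaw_eval_of_isGibbs_diagQuadratic {n : ℕ} {a : Fin n → ℝ} (ha : ∀ i, 0 < a i)
    {μ : Measure (Euc n)} (hμ : IsGibbs (diagQuadratic a) μ) (i : Fin n) :
    HasLaw (fun x : Euc n ↦ x i) (gaussianReal 0 (a i)⁻¹.toNNReal) μ := by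
  rw [hμ.unique (isGibbs_diagQuadratic ha)]
  exact hasLaw_eval_diagGaussian (fun i ↦ (a i)⁻¹.toNNReal) i

end Gibbs

section Autoregressive

/-- `Z` is a (weak) white noise: square-integrable, centered, of unit variance and pairwise
uncorrelated. No independence is assumed. -/
structure IsWhiteNoise {Ω : Type*} [MeasurableSpace Ω] (Z : ℕ → Ω → ℝ) (P : Measure Ω) :
    Prop where
  memLp : ∀ k, MemLp (Z k) 2 P
  integral_eq_zero : ∀ k, ∫ ω, Z k ω ∂P = 0
  variance_eq_one : ∀ k, Var[Z k; P] = 1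
  covariance_eq_zero : Pairwise fun i j ↦ cov[Z i, Z j; P] = 0

/-- `X` is the first-order autoregressive process `Xₖ₊₁ = b Xₖ + c Zₖ₊₁` driven by `Z`, started
at the deterministic point `x₀`. The term `Z 0` is never used. -/
structure IsAutoregressive {Ω : Type*} (b c x₀ : ℝ) (Z X : ℕ → Ω → ℝ) : Prop where
  zero : X 0 = fun _ ↦ x₀
  succ : ∀ k, X (k + 1) = b • X k + c • Z (k + 1)

variable {Ω : Type*} [MeasurableSpace Ω] {P : Measure Ω} {Z X : ℕ → Ω → ℝ} {b c x₀ : ℝ}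

namespace IsAutoregressive

lemma memLp [IsFiniteMeasure P] (hX : IsAutoregressive b c x₀ Z X)
    (hZ : ∀ k, MemLp (Z k) 2 P) (k : ℕ) : MemLp (X k) 2 P := by
  induction k with
  | zero => rw [hX.zero]; exact memLp_const x₀
  | succ k ih => simpa only [hX.succ] using (ih.const_smul b).add ((hZ (k + 1)).const_smul c)

lemma integral_eq [IsProbabilityMeasure P] (hX : IsAutoregressive b c x₀ Z X)
    (hZ : IsWhiteNoise Z P) (k : ℕ) : ∫ ω, X k ω ∂P = b ^ k * x₀ := by
  induction k with
  | zero => simp [hX.zero]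
  | succ k ih =>
    rw [hX.succ, integral_add' (((hX.memLp hZ.memLp k).integrable one_le_two).smul b)
      (((hZ.memLp (k + 1)).integrable one_le_two).smul c)]
    simp only [Pi.smul_apply, smul_eq_mul, integral_const_mul, ih, hZ.integral_eq_zero]
    ring

lemma covariance_eq_zero [IsProbabilityMeasure P] (hX : IsAutoregressive b c x₀ Z X)
    (hZ : IsWhiteNoise Z P) {k j : ℕ} (hkj : k < j) : cov[X k, Z j; P] = 0 := by
  induction k with
  | zero => rw [hX.zero, covariance_const_left]
  | succ k ih =>
    rw [hX.succ, covariance_add_left ((hX.memLp hZ.memLp k).const_smul b)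
      ((hZ.memLp (k + 1)).const_smul c) (hZ.memLp j), covariance_smul_left,
      covariance_smul_left, ih (by omega), hZ.covariance_eq_zero hkj.ne]
    ring

lemma variance_succ [IsProbabilityMeasure P] (hX : IsAutoregressive b c x₀ Z X)
    (hZ : IsWhiteNoise Z P) (k : ℕ) : Var[X (k + 1); P] = b ^ 2 * Var[X k; P] + c ^ 2 := by
  rw [hX.succ, variance_add ((hX.memLp hZ.memLp k).const_smul b)
    ((hZ.memLp (k + 1)).const_smul c), variance_smul, variance_smul, covariance_smul_left,
    covariance_smul_right, hX.covariance_eq_zero hZ k.lt_succ_self, hZ.variance_eq_one]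
  ring

lemma one_sub_sq_mul_variance [IsProbabilityMeasure P] (hX : IsAutoregressive b c x₀ Z X)
    (hZ : IsWhiteNoise Z P) (k : ℕ) :
    (1 - b ^ 2) * Var[X k; P] = c ^ 2 * (1 - (b ^ k) ^ 2) := by
  induction k with
  | zero =>
    have hvar : Var[X 0; P] = 0 := by
      rw [hX.zero, ← covariance_self (by fun_prop), covariance_const_left]
    rw [hvar]
    ring
  | succ k ih =>
    rw [hX.variance_succ hZ]
    linear_combination b ^ 2 * ih

end IsAutoregressive

lemma isWhiteNoise_eval_of_iIndepFun_stdGaussian {n : ℕ} {ξ : ℕ → Ω → Euc n}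
    (hξ : ∀ k, HasLaw (ξ k) (stdGaussian n) P) (hindep : iIndepFun ξ P) (i : Fin n) :
    IsWhiteNoise (fun k ω ↦ ξ k ω i) P := by
  have hlaw (k : ℕ) : HasLaw (fun ω ↦ ξ k ω i) (gaussianReal 0 1) P :=
    (hasLaw_eval_diagGaussian 1 i).comp (stdGaussian_eq_diagGaussian n ▸ hξ k)
  have hmemLp (k : ℕ) : MemLp (fun ω ↦ ξ k ω i) 2 P := memLp_two_of_hasLaw_gaussianReal (hlaw k)
  exact
    { memLp := hmemLp
      integral_eq_zero := fun k ↦ (hlaw k).integral_eq.trans integral_id_gaussianReal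
      variance_eq_one := fun k ↦ (hlaw k).variance_eq.trans (by simp)
      covariance_eq_zero := fun j k hjk ↦
        ((hindep.indepFun hjk).comp (φ := fun x : Euc n ↦ x i) (ψ := fun x : Euc n ↦ x i)
          (by fun_prop) (by fun_prop)).covariance_eq_zero (hmemLp j) (hmemLp k) }

end Autoregressive

section Langevin

/-- `X` is the sequence of iterates of Langevin Monte Carlo for the potential `f` with step size
`h`, initial point `x₀` and noise `ξ`. -/
structure IsLMC {E Ω : Type*} [NormedAddCommGroup E] [InnerProductSpace ℝ E] [CompleteSpace E]
    (f : E → ℝ) (h : ℝ) (x₀ : E) (ξ X : ℕ → Ω → E) : Prop where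
  zero : X 0 = fun _ ↦ x₀
  succ : ∀ k, X (k + 1) = fun ω ↦ X k ω - h • gradient f (X k ω) + √(2 * h) • ξ (k + 1) ω

lemma IsLMC.isAutoregressive {ι Ω : Type*} [Fintype ι] {a : ι → ℝ} {h : ℝ}
    {x₀ : EuclideanSpace ℝ ι} {ξ X : ℕ → Ω → EuclideanSpace ℝ ι}
    (hX : IsLMC (diagQuadratic a) h x₀ ξ X) (i : ι) :
    IsAutoregressive (1 - h * a i) √(2 * h) (x₀ i) (fun k ω ↦ ξ k ω i) (fun k ω ↦ X k ω i) where
  zero := by simp only [hX.zero]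
  succ k := by
    funext ω
    simp only [hX.succ, gradient_diagQuadratic, PiLp.add_apply, PiLp.sub_apply, PiLp.smul_apply,
      Pi.add_apply, Pi.smul_apply, smul_eq_mul]
    ring

lemma fquad_eq_diagQuadratic (d : ℕ) (m L : ℝ) :
    fquad d m L = diagQuadratic fun i : Fin (2 * d) ↦ if (i : ℕ) < d then m else L := rfl

lemma card_filter_val_lt_two_mul (d : ℕ) :
    (Finset.univ.filter fun i : Fin (2 * d) ↦ (i : ℕ) < d).card = d := by
  rw [Fin.card_filter_val_lt]
  omega

end Langevin

section SlowCoordinate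

variable {h r : ℝ} {k : ℕ}

lemma exp_neg_two_mul_le_one_sub (hh0 : 0 ≤ h) (hh1 : h ≤ 1 / 2) :
    Real.exp (-(2 * h)) ≤ 1 - h := by
  have hexp : 1 + 2 * h ≤ Real.exp (2 * h) := by linarith [Real.add_one_le_exp (2 * h)]
  rw [Real.exp_neg, inv_le_iff_one_le_mul₀ (Real.exp_pos _)]
  calc (1 : ℝ) ≤ (1 - h) * (1 + 2 * h) := by nlinarith
    _ ≤ (1 - h) * Real.exp (2 * h) := by gcongr; linarith

lemma lt_one_sub_pow_of_lt_log (hh0 : 0 ≤ h) (hh1 : h ≤ 1 / 2) (hr : 0 < r) (hhr : h ≤ 4 * r)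
    (hk : (k : ℝ) < 1 / (8 * r) * Real.log (1 / r)) : r < (1 - h) ^ k := by
  have hlog : k * (2 * h) < -Real.log r := by
    rw [one_div r, Real.log_inv, div_mul_eq_mul_div, one_mul, lt_div_iff₀ (by positivity)] at hk
    calc k * (2 * h) ≤ k * (2 * (4 * r)) := by gcongr
      _ = k * (8 * r) := by ring
      _ < -Real.log r := hk
  calc r = Real.exp (Real.log r) := (Real.exp_log hr).symm
    _ < Real.exp (k * -(2 * h)) := Real.exp_lt_exp.2 (by linarith)
    _ = Real.exp (-(2 * h)) ^ k := Real.exp_nat_mul _ k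
    _ ≤ (1 - h) ^ k := by gcongr; exact exp_neg_two_mul_le_one_sub hh0 hh1

lemma one_add_lt_sqrt_of_four_mul_lt {p v : ℝ} (hr : 0 < r) (hrh : 4 * r < h) (hh1 : h < 2)
    (hp0 : 0 ≤ p) (hpr : p ≤ r) (hv : (1 - h / 2) * v = 1 - p ^ 2) : 1 + r < √v := by
  refine Real.lt_sqrt_of_sq_lt (lt_of_mul_lt_mul_left ?_ (by linarith : 0 ≤ 1 - h / 2))
  calc (1 - h / 2) * (1 + r) ^ 2 ≤ (1 - 2 * r) * (1 + r) ^ 2 := by gcongr; linarith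
    _ = 1 - r ^ 2 - 2 * r ^ 2 * (1 + r) := by ring
    _ < 1 - r ^ 2 := sub_lt_self _ (by positivity)
    _ ≤ 1 - p ^ 2 := by gcongr
    _ = (1 - h / 2) * v := hv.symm

lemma sq_lt_sq_sqrt_sub_one_add_sq {v : ℝ} (hh0 : 0 ≤ h) (hh1 : h ≤ 1 / 2) (hr : 0 < r)
    (hk : (k : ℝ) < 1 / (8 * r) * Real.log (1 / r))
    (hv : (1 - h / 2) * v = 1 - ((1 - h) ^ k) ^ 2) :
    r ^ 2 < (√v - 1) ^ 2 + ((1 - h) ^ k) ^ 2 := by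
  have hpow : 0 ≤ (1 - h) ^ k := pow_nonneg (by linarith) k
  rcases lt_or_ge r ((1 - h) ^ k) with hmean | hmean
  · exact (pow_lt_pow_left₀ hmean hr.le two_ne_zero).trans_le (le_add_of_nonneg_left (sq_nonneg _))
  · have hstep : 4 * r < h := by
      by_contra! hhr
      exact hmean.not_gt (lt_one_sub_pow_of_lt_log hh0 hh1 hr hhr hk)
    have hstd : 1 + r < √v := one_add_lt_sqrt_of_four_mul_lt hr hstep (by linarith) hpow hmean hv
    exact (pow_lt_pow_left₀ (by linarith) hr.le two_ne_zero).trans_le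
      (le_add_of_nonneg_right (sq_nonneg _))

lemma IsAutoregressive.sq_lt_sq_stdDev_sub_one_add_sq_mean {Ω : Type*} [MeasurableSpace Ω]
    {P : Measure Ω} [IsProbabilityMeasure P] {Z X : ℕ → Ω → ℝ}
    (hX : IsAutoregressive (1 - h) √(2 * h) 1 Z X) (hZ : IsWhiteNoise Z P) (hh0 : 0 < h)
    (hh1 : h ≤ 1 / 2) (hr : 0 < r) (hk : (k : ℝ) < 1 / (8 * r) * Real.log (1 / r)) :
    r ^ 2 < (√Var[X k; P] - 1) ^ 2 + (∫ ω, X k ω ∂P) ^ 2 := by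
  rw [hX.integral_eq hZ, mul_one]
  have hvar := hX.one_sub_sq_mul_variance hZ k
  rw [Real.sq_sqrt (by positivity)] at hvar
  refine sq_lt_sq_sqrt_sub_one_add_sq hh0.le hh1 hr hk <|
    mul_left_cancel₀ (by positivity : 2 * h ≠ 0) ?_
  linear_combination hvar

end SlowCoordinate

theorem lmc_mixing_time_lower_bound_general {n : ℕ} {Ω : Type*} [MeasurableSpace Ω]
    {P : Measure Ω} [IsProbabilityMeasure P] {a : Fin n → ℝ} (ha : ∀ i, 0 < a i) {S : Finset (Fin n)}
    (hS : ∀ i ∈ S, a i = 1) {μ : Measure (Euc n)} (hμ : IsGibbs (diagQuadratic a) μ) {h : ℝ}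
    (hh0 : 0 < h) (hh1 : h ≤ 1 / 2) {ξ : ℕ → Ω → Euc n}
    (hξ : ∀ i, IsWhiteNoise (fun k ω ↦ ξ k ω i) P) {X : ℕ → Ω → Euc n}
    (hX : IsLMC (diagQuadratic a) h (WithLp.toLp 2 fun _ ↦ 1) ξ X) {ε : ℝ} (hε : 0 < ε) {k : ℕ}
    (hk : (k : ℝ) < √S.card / (8 * ε) * Real.log (√S.card / ε)) :
    ε < W2 (P.map (X k)) μ := by
  have : IsProbabilityMeasure μ := hμ.1
  have hcard : 0 < √(S.card : ℝ) := by
    by_contra! hzero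
    simp [le_antisymm hzero (Real.sqrt_nonneg _), k.cast_nonneg.not_gt] at hk
  have hlaw := hasLaw_eval_of_isGibbs_diagQuadratic ha hμ
  have hX2 : MemLp (X k) 2 P :=
    .of_eval_piLp fun i ↦ (hX.isAutoregressive i).memLp (hξ i).memLp k
  have hμ2 : MemLp id 2 μ := .of_eval_piLp fun i ↦ memLp_two_of_hasLaw_gaussianReal (hlaw i)
  have hmean (i : Fin n) : ∫ x, x i ∂μ = 0 := (hlaw i).integral_eq.trans integral_id_gaussianReal
  have hslow (i) (hi : i ∈ S) : (ε / √S.card) ^ 2 <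
      (√Var[fun ω ↦ X k ω i; P] - √Var[fun x ↦ x i; μ]) ^ 2 +
        (∫ ω, X k ω i ∂P - ∫ x, x i ∂μ) ^ 2 := by
    have hXi := hX.isAutoregressive i
    have hvar : Var[fun x ↦ x i; μ] = 1 := (hlaw i).variance_eq.trans (by simp [hS i hi])
    rw [hS i hi, mul_one] at hXi
    rw [hmean, sub_zero, hvar, Real.sqrt_one]
    refine hXi.sq_lt_sq_stdDev_sub_one_add_sq_mean (hξ i) hh0 hh1 (div_pos hε hcard) ?_
    rwa [mul_div_assoc', one_div_div, one_div_div]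
  refine lt_of_pow_lt_pow_left₀ 2 (Real.sqrt_nonneg _) ?_
  calc ε ^ 2 = ∑ _i ∈ S, (ε / √S.card) ^ 2 := by
        rw [Finset.sum_const, nsmul_eq_mul, div_pow, Real.sq_sqrt (by positivity)]
        field_simp [(Real.sqrt_pos.1 hcard).ne']
    _ < ∑ i ∈ S, _ :=
        Finset.sum_lt_sum_of_nonempty (Finset.card_pos.1 (by simpa using hcard)) hslow
    _ ≤ ∑ i, _ := Finset.sum_le_univ_sum_of_nonneg fun i ↦ by positivity
    _ ≤ W2 (P.map (X k)) μ ^ 2 := sum_sq_sub_stdDev_add_sq_sub_mean_le_sq_W2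
      ⟨hX2.aemeasurable, rfl⟩ .id hX2 hμ2

/-- **Lower bound of the mixing time of LMC** (Theorem 5).
For the quadratic potential `f(x) = (1/2) Σ_{i<d} x_i² + (L/2) Σ_{d≤i<2d} x_i²` with `L ≥ 4`,
the Gaussian target `μ ∝ exp (-f)`, any step size `0 < h < 2/L`, and initial point
`x₀ = (1, …, 1)`, every `ε > 0` and every `k < (√d/(8ε)) log (√d/ε)` satisfy
`W₂(Law(x̄_k), μ) > ε`. -/
theorem lmc_mixing_time_lower_bound
    {d : ℕ} {Ω : Type*} {mΩ : MeasurableSpace Ω} {P : Measure Ω} [IsProbabilityMeasure P]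
    {L : ℝ} (hL : 4 ≤ L)
    {μ : Measure (Euc (2 * d))} (hμ : IsGibbs (fquad d 1 L) μ)
    {h : ℝ} (hh0 : 0 < h) (hh1 : h < 2 / L)
    {ξ : ℕ → Ω → Euc (2 * d)} (hξmeas : ∀ k, Measurable (ξ k))
    (hξlaw : ∀ k, P.map (ξ k) = stdGaussian (2 * d))
    (hindep : iIndepFun ξ P)
    {Xb : ℕ → Ω → Euc (2 * d)} (hXb0 : Xb 0 = fun _ => WithLp.toLp 2 fun _ : Fin (2 * d) => (1 : ℝ))
    (hXb : ∀ k : ℕ, Xb (k + 1) = fun ω =>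
      Xb k ω - h • gradient (fquad d 1 L) (Xb k ω) + Real.sqrt (2 * h) • ξ (k + 1) ω)
    {ε : ℝ} (hε : 0 < ε) (k : ℕ)
    (hkmix : (k : ℝ) < Real.sqrt d / (8 * ε) * Real.log (Real.sqrt d / ε)) :
    ε < W2 (P.map (Xb k)) μ := by
  have hh2 : h ≤ 1 / 2 := by
    rw [lt_div_iff₀ (by linarith)] at hh1
    nlinarith
  rw [fquad_eq_diagQuadratic] at hμ hXb
  exact lmc_mixing_time_lower_bound_general (fun i ↦ by split_ifs <;> linarith)
    (fun i hi ↦ if_pos (Finset.mem_filter.1 hi).2) hμ hh0 hh2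
    (isWhiteNoise_eval_of_iIndepFun_stdGaussian
      (fun k ↦ ⟨(hξmeas k).aemeasurable, hξlaw k⟩) hindep)
    ⟨hXb0, hXb⟩ hε (by rwa [card_filter_val_lt_two_mul])

end
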